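/- arXiv:1803.02992 — 2 statements merged into one kernel-verified Lean document; each statement's English description precedes it below -/
import Mathlib

section
/- Let N be a nonempty finite index set, let b_i ∈ ℝ² and b_i* ∈ ℝ² be unit vectors, and for each j ∈ N let b_j ∈ ℝ², let b_j* ∈ ℝ² be a unit vector, and let α_j ∈ ℝ satisfy b_i* = R(α_j) b_j*. Then ⟨b_i − b_i*, P_{b_i} Σ_{j ∈ N} R(α_j) b_j⟩ ≤ −|N| · ‖P_{b_i} b_i*‖² + ‖P_{b_i} b_i*‖ · Σ_{j ∈ N} ‖b_j − b_j*‖, where P_{b_i} := I₂ − b_i b_iᵀ. -/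
open scoped RealInnerProductSpace
open Real Filter MeasureTheory

/-- The orthogonal projection `P_b v = (I₂ - b bᵀ) v = v - ⟨b, v⟩ b`. -/
noncomputable def proj (b v : EuclideanSpace ℝ (Fin 2)) : EuclideanSpace ℝ (Fin 2) :=
  v - ⟪b, v⟫ • b

/-- The counterclockwise rotation of the plane through angle α. -/
noncomputable def rot (α : ℝ) (v : EuclideanSpace ℝ (Fin 2)) : EuclideanSpace ℝ (Fin 2) :=
  (WithLp.equiv 2 (Fin 2 → ℝ)).symm
    ![Real.cos α * v 0 - Real.sin α * v 1, Real.sin α * v 0 + Real.cos α * v 1]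

/-- The unit vector at angle θ: (cos θ, sin θ). -/
noncomputable def dir (θ : ℝ) : EuclideanSpace ℝ (Fin 2) :=
  (WithLp.equiv 2 (Fin 2 → ℝ)).symm ![Real.cos θ, Real.sin θ]

/-! Write `P` for `P_{b_i}` and `R_j` for `R(α_j)`. Since `P` is a symmetric projection with
`P b_i = 0`, the left-hand side equals `-∑ j, ⟪P b_i*, R_j b_j⟫`. As `b_i* = R_j b_j*`, each vector
`R_j b_j` is `b_i*` plus the perturbation `R_j (b_j - b_j*)`: the first part contributes
`-⟪P b_i*, b_i*⟫ = -‖P b_i*‖²`, and the second is controlled by Cauchy–Schwarz, its norm being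
`‖b_j - b_j*‖` because `R_j` is an isometry. -/

section InnerProductSpace

variable {ι E F : Type*} [NormedAddCommGroup E] [InnerProductSpace ℝ E]
  [SeminormedAddCommGroup F] [Module ℝ F] (K : Submodule ℝ E) [K.HasOrthogonalProjection]

theorem real_inner_starProjection_self (w : E) :
    ⟪K.starProjection w, w⟫ = ‖K.starProjection w‖ ^ 2 :=
  K.re_inner_starProjection_eq_normSq w

theorem real_inner_sub_starProjection_of_mem_orthogonal {b : E} (hb : b ∈ Kᗮ) (w v : E) :
    ⟪b - w, K.starProjection v⟫ = -⟪K.starProjection w, v⟫ := by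
  have hPb : K.starProjection b = 0 := K.starProjection_apply_eq_zero_iff.mpr hb
  rw [← K.inner_starProjection_left_eq_right, map_sub, hPb, zero_sub, inner_neg_left]

theorem neg_real_inner_starProjection_le (w x : E) :
    -⟪K.starProjection w, x⟫ ≤
      -‖K.starProjection w‖ ^ 2 + ‖K.starProjection w‖ * ‖x - w‖ := by
  have cauchy_schwarz := real_inner_le_norm (K.starProjection w) (w - x)
  rw [inner_sub_right, real_inner_starProjection_self, norm_sub_rev] at cauchy_schwarz
  linarith

theorem real_inner_sub_starProjection_sum_le {b : E} (hb : b ∈ Kᗮ) (w : E) (N : Finset ι)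
    (x : ι → E) :
    ⟪b - w, K.starProjection (∑ j ∈ N, x j)⟫ ≤
      -(N.card : ℝ) * ‖K.starProjection w‖ ^ 2 + ‖K.starProjection w‖ * ∑ j ∈ N, ‖x j - w‖ :=
  calc ⟪b - w, K.starProjection (∑ j ∈ N, x j)⟫
      = ∑ j ∈ N, -⟪K.starProjection w, x j⟫ := by
        rw [real_inner_sub_starProjection_of_mem_orthogonal K hb, inner_sum,
          Finset.sum_neg_distrib]
    _ ≤ ∑ j ∈ N, (-‖K.starProjection w‖ ^ 2 + ‖K.starProjection w‖ * ‖x j - w‖) :=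
        Finset.sum_le_sum fun j _ ↦ neg_real_inner_starProjection_le K w (x j)
    _ = -(N.card : ℝ) * ‖K.starProjection w‖ ^ 2 +
          ‖K.starProjection w‖ * ∑ j ∈ N, ‖x j - w‖ := by
        rw [Finset.sum_add_distrib, Finset.sum_const, nsmul_eq_mul, Finset.mul_sum, mul_neg,
          neg_mul]

theorem stmt11_general {b : E} (hb : b ∈ Kᗮ) {w : E} {N : Finset ι} {R : ι → F →ₗᵢ[ℝ] E}
    (v : ι → F) {u : ι → F} (hR : ∀ j ∈ N, w = R j (u j)) :
    ⟪b - w, K.starProjection (∑ j ∈ N, R j (v j))⟫ ≤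
      -(N.card : ℝ) * ‖K.starProjection w‖ ^ 2 +
        ‖K.starProjection w‖ * ∑ j ∈ N, ‖v j - u j‖ := by
  have norm_perturbation : ∀ j ∈ N, ‖R j (v j) - w‖ = ‖v j - u j‖ := fun j hj ↦ by
    rw [hR j hj, ← map_sub, LinearIsometry.norm_map]
  rw [← Finset.sum_congr rfl norm_perturbation]
  exact real_inner_sub_starProjection_sum_le K hb w N fun j ↦ R j (v j)

end InnerProductSpace

theorem proj_eq_starProjection {b : EuclideanSpace ℝ (Fin 2)} (hb : ‖b‖ = 1) :
    proj b = (ℝ ∙ b)ᗮ.starProjection := by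
  ext1 v
  rw [Submodule.starProjection_orthogonal_val, Submodule.starProjection_unit_singleton ℝ hb, proj]

theorem rot_apply_zero (α : ℝ) (v : EuclideanSpace ℝ (Fin 2)) :
    rot α v 0 = Real.cos α * v 0 - Real.sin α * v 1 :=
  rfl

theorem rot_apply_one (α : ℝ) (v : EuclideanSpace ℝ (Fin 2)) :
    rot α v 1 = Real.sin α * v 0 + Real.cos α * v 1 :=
  rfl

theorem rot_add (α : ℝ) (v w : EuclideanSpace ℝ (Fin 2)) :
    rot α (v + w) = rot α v + rot α w := by
  refine PiLp.ext (Fin.forall_fin_two.mpr ⟨?_, ?_⟩) <;>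
    simp only [rot_apply_zero, rot_apply_one, PiLp.add_apply] <;> ring

theorem rot_smul (α c : ℝ) (v : EuclideanSpace ℝ (Fin 2)) : rot α (c • v) = c • rot α v := by
  refine PiLp.ext (Fin.forall_fin_two.mpr ⟨?_, ?_⟩) <;>
    simp only [rot_apply_zero, rot_apply_one, PiLp.smul_apply, smul_eq_mul] <;> ring

theorem norm_rot (α : ℝ) (v : EuclideanSpace ℝ (Fin 2)) : ‖rot α v‖ = ‖v‖ := by
  rw [← sq_eq_sq₀ (norm_nonneg _) (norm_nonneg _)]
  simp only [EuclideanSpace.real_norm_sq_eq, Fin.sum_univ_two, rot_apply_zero, rot_apply_one]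
  linear_combination (v 0 ^ 2 + v 1 ^ 2) * Real.sin_sq_add_cos_sq α

/-- The rotation `rot α`, bundled as a linear isometry so that the general inequality for
families of linear isometries applies to it. -/
noncomputable def rotLinearIsometry (α : ℝ) :
    EuclideanSpace ℝ (Fin 2) →ₗᵢ[ℝ] EuclideanSpace ℝ (Fin 2) where
  toFun := rot α
  map_add' := rot_add α
  map_smul' := rot_smul α
  norm_map' := norm_rot α

/-- Lyapunov derivative bound for agent i: with b_i* = R(α_j) b_j* for all j ∈ N,
⟨b_i - b_i*, P_{b_i} Σ_j R(α_j) b_j⟩ ≤ -|N|‖P_{b_i} b_i*‖² + ‖P_{b_i} b_i*‖ Σ_j ‖b_j - b_j*‖. -/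
theorem stmt11 {ι : Type*} (N : Finset ι) (hN : N.Nonempty)
    (bi bis : EuclideanSpace ℝ (Fin 2)) (hbi : ‖bi‖ = 1) (hbis : ‖bis‖ = 1)
    (bj : ι → EuclideanSpace ℝ (Fin 2)) (bjs : ι → EuclideanSpace ℝ (Fin 2)) (αj : ι → ℝ)
    (hunit : ∀ j ∈ N, ‖bjs j‖ = 1)
    (hang : ∀ j ∈ N, bis = rot (αj j) (bjs j)) :
    ⟪bi - bis, proj bi (∑ j ∈ N, rot (αj j) (bj j))⟫ ≤
      -(N.card : ℝ) * ‖proj bi bis‖ ^ 2 + ‖proj bi bis‖ * ∑ j ∈ N, ‖bj j - bjs j‖ := by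
  rw [proj_eq_starProjection hbi]
  exact stmt11_general (R := fun j ↦ rotLinearIsometry (αj j)) _
    (Submodule.le_orthogonal_orthogonal _ (Submodule.mem_span_singleton_self bi)) bj hang
end

section
/- Let n ≥ 2 and let p₁, …, pₙ ∈ ℝ² be fixed positions and p* ∈ ℝ² a target point with p* ≠ p_i for all i. Define the target headings b_i* := (p* − p_i)/‖p* − p_i‖. Suppose the communication graph is a rooted out-branching topologically ordered so that each agent i ∈ {2, …, n} has a nonempty neighbor set N_i ⊆ {1, …, i−1}, and for each i ≥ 2 and each j ∈ N_i an angle α_{ij} ∈ ℝ is given with b_i* = R(α_{ij}) b_j*. Consider the closed-loop dynamics ḃ₁ = P_{b₁} b₁*, and ḃ_i = P_{b_i} Σ_{j ∈ N_i} R(α_{ij}) b_j for i = 2, …, n. Then for (Lebesgue-)almost every vector of initial angles (θ₁, …, θₙ) ∈ ℝⁿ, every differentiable solution (b₁, …, bₙ) : [0, ∞) → (ℝ²)ⁿ of this system with b_i(0) = (cos θ_i, sin θ_i) satisfies b_i(t) → b_i* for every i as t → ∞; in particular b₁ → b₁* and b_i − R(α_{ij}) b_j → 0 for every edge (j, i),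 so all headings asymptotically point toward the common target p*. -/
open scoped RealInnerProductSpace
open Real Filter MeasureTheory

/-!
Suppose the input of an agent converges to `m • e` with `m > 0` and `‖e‖ = 1`. Then `V = ⟪b, e⟫`
satisfies `V' ≥ m (1 - V²) - o(1)`, so that `b` converges either to `e` or to `-e`. The antipode
`-e` is a repeller: if `b` and `c` follow the same input, then
`(1 - ⟪b, c⟫)' = -⟪b + c, u⟫ (1 - ⟪b, c⟫)`, and the rate `-⟪b + c, u⟫` tends to `2m > 0` when both
converge to `-e`, which is compatible with `1 - ⟪b, c⟫ → 0` only if `b = c`. Hence, once the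
initial headings of the other agents are fixed, at most one initial heading of agent `i` leads to
its antipode. In angle coordinates the dynamics has a globally Lipschitz bounded right-hand side,
so its flow is global and continuous; the exceptional set of agent `i` is therefore measurable, its
fibres in the `i`-th angle are countable, and it is null by Fubini. Induction along the order of
the agents finishes the proof.
-/

open Set
open scoped Topology NNReal

local notation "ℝ²" => EuclideanSpace ℝ (Fin 2)

section ODE

variable {E : Type*} [NormedAddCommGroup E] [NormedSpace ℝ E]

section LinearODE

variable {f : ℝ → E} {g : ℝ → ℝ} {a : ℝ}

theorem eq_exp_integral_smul_of_hasDerivAt (hg : ContinuousOn g (Ici a))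
    (hf : ∀ t ≥ a, HasDerivAt f (g t • f t) t) {t : ℝ} (ht : a ≤ t) :
    f t = exp (∫ s in a..t, g s) • f a := by
  have hint : ∀ s ≥ a, IntervalIntegrable g volume a s := fun s hs =>
    (hg.mono Icc_subset_Ici_self).intervalIntegrable_of_Icc hs
  have hprim : ∀ s ≥ a, HasDerivWithinAt (fun s => ∫ r in a..s, g r) (g s) (Ici s) s := fun s hs =>
    have hsub : Ioi s ⊆ Ici a := Ioi_subset_Ici hs
    intervalIntegral.integral_hasDerivWithinAt_right (hint s hs) (t := Ioi s)
      ((hg.mono hsub).stronglyMeasurableAtFilter_nhdsWithin measurableSet_Ioi s)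
      ((hg s hs).mono hsub)
  have hcont : ContinuousOn (fun s => exp (-∫ r in a..s, g r) • f s) (Icc a t) := by
    have hprim_cont : ContinuousOn (fun s => ∫ r in a..s, g r) (Icc a t) := by
      simpa only [uIcc_of_le ht] using
        intervalIntegral.continuousOn_primitive_interval' (hint t ht) left_mem_uIcc
    exact hprim_cont.neg.rexp.smul fun s hs => (hf s hs.1).continuousAt.continuousWithinAt
  have hconst : exp (-∫ r in a..t, g r) • f t = f a := by
    have hzero := constant_of_has_deriv_right_zero hcont (fun s hs =>
      ((hprim s hs.1).fun_neg.exp.fun_smul (hf s hs.1).hasDerivWithinAt).congr_deriv (by module))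
    simpa using hzero t (right_mem_Icc.2 ht)
  rw [← hconst, smul_smul, ← Real.exp_add, add_neg_cancel, Real.exp_zero, one_smul]

theorem eq_zero_of_hasDerivAt_smul_of_tendsto_zero (hg : ContinuousOn g (Ici a))
    (hf : ∀ t ≥ a, HasDerivAt f (g t • f t) t) (hg_nonneg : ∀ᶠ t in atTop, 0 ≤ g t)
    (hlim : Tendsto f atTop (𝓝 0)) : f a = 0 := by
  obtain ⟨T, hT⟩ := eventually_atTop.1 ((eventually_ge_atTop a).and hg_nonneg)
  have haT : a ≤ T := (hT T le_rfl).1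
  have hgrow : ∀ t ≥ T, ‖f T‖ ≤ ‖f t‖ := fun t ht => by
    rw [eq_exp_integral_smul_of_hasDerivAt (hg.mono (Ici_subset_Ici.2 haT))
      (fun s hs => hf s (haT.trans hs)) ht, norm_smul, Real.norm_of_nonneg (exp_nonneg _)]
    exact le_mul_of_one_le_left (norm_nonneg _) (one_le_exp
      (intervalIntegral.integral_nonneg ht fun s hs => (hT s hs.1).2))
  have hfT : f T = 0 := norm_le_zero_iff.1 <| by
    simpa using ge_of_tendsto hlim.norm ((eventually_ge_atTop T).mono hgrow)
  rw [eq_exp_integral_smul_of_hasDerivAt hg hf haT] at hfT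
  exact (smul_eq_zero.1 hfT).resolve_left (exp_ne_zero _)

end LinearODE

section GlobalFlow

variable {F : E → E} {K : ℝ≥0}

theorem exists_isIntegralCurve_of_forall_Ioo (hF : LipschitzWith K F) {x : E}
    (h : ∀ r > 0, ∃ φ : ℝ → E, φ 0 = x ∧ ∀ t ∈ Ioo (-r) r, HasDerivAt φ (F (φ t)) t) :
    ∃ φ : ℝ → E, φ 0 = x ∧ IsIntegralCurve φ fun _ => F := by
  choose! φ hφ_zero hφ using h
  have hagree : ∀ {r R}, 0 < r → r ≤ R → EqOn (φ r) (φ R) (Ioo (-r) r) := fun {r R} hr hrR =>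
    ODE_solution_unique_of_mem_Ioo (v := fun _ => F) (s := fun _ => univ) (t₀ := 0)
      (fun _ _ => hF.lipschitzOnWith) ⟨neg_lt_zero.2 hr, hr⟩ (fun t ht => ⟨hφ r hr t ht, trivial⟩)
      (fun t ht => ⟨hφ R (hr.trans_le hrR) t
        (Ioo_subset_Ioo (neg_le_neg hrR) hrR ht), trivial⟩)
      (by rw [hφ_zero r hr, hφ_zero R (hr.trans_le hrR)])
  have hpos : ∀ s : ℝ, 0 < |s| + 1 := fun s => by positivity
  have hglue : ∀ R > 0, EqOn (fun s => φ (|s| + 1) s) (φ R) (Ioo (-R) R) := fun R hR s hs => by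
    rcases le_total (|s| + 1) R with hle | hle
    · exact hagree (hpos s) hle (abs_lt.1 (lt_add_one |s|))
    · exact (hagree hR hle hs).symm
  refine ⟨fun s => φ (|s| + 1) s, hφ_zero _ (hpos 0), fun t => ?_⟩
  have ht : t ∈ Ioo (-(|t| + 1)) (|t| + 1) := abs_lt.1 (lt_add_one |t|)
  exact (hφ _ (hpos t) t ht).congr_of_eventuallyEq
    ((hglue _ (hpos t)).eventuallyEq_of_mem (Ioo_mem_nhds ht.1 ht.2))

theorem exists_isIntegralCurve_of_lipschitzWith_of_norm_le [CompleteSpace E] {M : ℝ≥0}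
    (hF : LipschitzWith K F) (hM : ∀ x, ‖F x‖ ≤ M) (x : E) :
    ∃ φ : ℝ → E, φ 0 = x ∧ IsIntegralCurve φ fun _ => F := by
  refine exists_isIntegralCurve_of_forall_Ioo hF fun r hr => ?_
  lift r to ℝ≥0 using hr.le
  have hPL : IsPicardLindelof (fun _ => F)
      (⟨0, neg_nonpos.2 hr.le, hr.le⟩ : Icc (-(r : ℝ)) r) x (M * r) 0 M K :=
    { lipschitzOnWith := fun _ _ => hF.lipschitzOnWith
      continuousOn := fun _ _ => continuousOn_const
      norm_le := fun _ _ y _ => hM y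
      mul_max_le := by simp }
  obtain ⟨φ, hφ_zero, hφ⟩ := hPL.exists_eq_forall_mem_Icc_hasDerivWithinAt₀
  exact ⟨φ, hφ_zero, fun t ht =>
    (hφ t (Ioo_subset_Icc_self ht)).hasDerivAt (Icc_mem_nhds ht.1 ht.2)⟩

theorem continuous_of_forall_isIntegralCurve {φ : E → ℝ → E} (hF : LipschitzWith K F)
    (hφ_zero : ∀ x, φ x 0 = x) (hφ : ∀ x, IsIntegralCurve (φ x) fun _ => F) {t : ℝ}
    (ht : 0 ≤ t) : Continuous fun x => φ x t := by
  refine (LipschitzWith.of_dist_le_mul (K := (exp (K * t)).toNNReal) fun x y => ?_).continuous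
  have hgronwall := dist_le_of_trajectories_ODE (v := fun _ => F) (fun _ => hF)
    (hφ x).continuous.continuousOn (fun s _ => (hφ x s).hasDerivWithinAt)
    (hφ y).continuous.continuousOn (fun s _ => (hφ y s).hasDerivWithinAt)
    (by rw [hφ_zero, hφ_zero]) t (right_mem_Icc.2 ht)
  rwa [sub_zero, mul_comm, ← Real.coe_toNNReal _ (exp_nonneg (K * t))] at hgronwall

end GlobalFlow

end ODE

section DifferentialInequality

variable {f f' : ℝ → ℝ} {c d S : ℝ}

theorem le_of_hasDerivAt_pos_of_eq (hf : ∀ t ≥ S, HasDerivAt f (f' t) t)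
    (hf' : ∀ t ≥ S, f t = c → 0 < f' t) (hS : c ≤ f S) {t : ℝ} (ht : S ≤ t) : c ≤ f t :=
  neg_le_neg_iff.1 <| image_le_of_deriv_right_lt_deriv_boundary
    (f := fun s => -f s) (f' := fun s => -f' s) (B := fun _ => -c) (B' := fun _ => 0)
    (fun s hs => (hf s hs.1).neg.continuousAt.continuousWithinAt)
    (fun s hs => (hf s hs.1).neg.hasDerivWithinAt) (neg_le_neg hS)
    (fun _ => hasDerivAt_const _ _)
    (fun s hs heq => neg_neg_iff_pos.2 (hf' s hs.1 (neg_injective heq))) (right_mem_Icc.2 ht)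

theorem eventually_ge_of_le_hasDerivAt {δ : ℝ} (hcd : c ≤ d) (hδ : 0 < δ)
    (hf : ∀ t ≥ S, HasDerivAt f (f' t) t) (hf' : ∀ t ≥ S, f t ∈ Icc c d → δ ≤ f' t)
    (hS : c ≤ f S) : ∀ᶠ t in atTop, d ≤ f t := by
  have hge : ∀ t ≥ S, c ≤ f t := fun t => le_of_hasDerivAt_pos_of_eq hf
    (fun s hs heq => hδ.trans_le (hf' s hs ⟨heq.ge, heq.trans_le hcd⟩)) hS
  obtain ⟨R, hSR, hR⟩ : ∃ R ≥ S, d ≤ f R := by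
    by_contra! hlt
    have hgrow := (convex_Ici S).mul_sub_le_image_sub_of_le_deriv (C := δ)
      (fun t ht => (hf t ht).continuousAt.continuousWithinAt)
      (fun t ht => (hf t (interior_subset ht)).differentiableAt.differentiableWithinAt)
      (fun t ht => by
        have ht : S ≤ t := interior_subset ht
        rw [(hf t ht).deriv]
        exact hf' t ht ⟨hge t ht, (hlt t ht).le⟩)
    have hle : S ≤ S + (d - c) / δ := le_add_of_nonneg_right (div_nonneg (sub_nonneg.2 hcd) hδ.le)
    have hstep := hgrow S self_mem_Ici (S + (d - c) / δ) hle hle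
    rw [add_sub_cancel_left, mul_div_cancel₀ _ hδ.ne'] at hstep
    linarith [hlt _ hle]
  filter_upwards [eventually_ge_atTop R] with t ht
  exact le_of_hasDerivAt_pos_of_eq (fun s hs => hf s (hSR.trans hs))
    (fun s hs heq => hδ.trans_le (hf' s (hSR.trans hs) ⟨hcd.trans heq.ge, heq.le⟩)) hR ht

variable {g ε : ℝ → ℝ} {a b : ℝ}

theorem eventually_ge_or_eventually_lt_of_sub_le_hasDerivAt (hcd : c ≤ d)
    (hf : ∀ᶠ t in atTop, HasDerivAt f (f' t) t) (hg : ContinuousOn g (Icc c d))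
    (hg_pos : ∀ x ∈ Icc c d, 0 < g x) (hε : Tendsto ε atTop (𝓝 0))
    (hf' : ∀ᶠ t in atTop, g (f t) - ε t ≤ f' t) :
    (∀ᶠ t in atTop, d ≤ f t) ∨ ∀ᶠ t in atTop, f t < c := by
  obtain ⟨x, hx, hmin⟩ := isCompact_Icc.exists_isMinOn (nonempty_Icc.2 hcd) hg
  have hδ : 0 < g x / 2 := half_pos (hg_pos x hx)
  obtain ⟨T, hT⟩ := eventually_atTop.1 (hf.and (hf'.and (hε.eventually (gt_mem_nhds hδ))))
  by_cases hreach : ∃ S ≥ T, c ≤ f S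
  · obtain ⟨S, hTS, hS⟩ := hreach
    refine .inl (eventually_ge_of_le_hasDerivAt hcd hδ (fun t ht => (hT t (hTS.trans ht)).1)
      (fun t ht hft => ?_) hS)
    obtain ⟨-, hlower, hsmall⟩ := hT t (hTS.trans ht)
    have hgx : g x ≤ g (f t) := hmin hft
    linarith
  · push Not at hreach
    exact .inr (eventually_atTop.2 ⟨T, hreach⟩)

theorem tendsto_or_tendsto_of_sub_le_hasDerivAt
    (hf : ∀ᶠ t in atTop, HasDerivAt f (f' t) t) (hmem : ∀ᶠ t in atTop, f t ∈ Icc a b)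
    (hg : ContinuousOn g (Ioo a b)) (hg_pos : ∀ x ∈ Ioo a b, 0 < g x)
    (hε : Tendsto ε atTop (𝓝 0)) (hf' : ∀ᶠ t in atTop, g (f t) - ε t ≤ f' t) :
    Tendsto f atTop (𝓝 b) ∨ Tendsto f atTop (𝓝 a) := by
  by_cases hlow : ∀ c, a < c → c < b → ∀ᶠ t in atTop, f t < c
  · right
    refine tendsto_order.2 ⟨fun y hy => hmem.mono fun t ht => hy.trans_le ht.1, fun y hy => ?_⟩
    rcases lt_or_ge b y with hby | hyb
    · exact hmem.mono fun t ht => ht.2.trans_lt hby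
    · obtain ⟨c, hac, hcy⟩ := exists_between hy
      exact (hlow c hac (hcy.trans_le hyb)).mono fun t ht => ht.trans hcy
  · left
    simp only [not_forall] at hlow
    obtain ⟨c, hac, hcb, hc⟩ := hlow
    refine tendsto_order.2 ⟨fun y hy => ?_, fun y hy => hmem.mono fun t ht => ht.2.trans_lt hy⟩
    obtain ⟨d, hd, hdb⟩ := exists_between (max_lt hy hcb)
    have hsub : Icc c d ⊆ Ioo a b := Icc_subset_Ioo hac hdb
    have hge := (eventually_ge_or_eventually_lt_of_sub_le_hasDerivAt
      ((le_max_right _ _).trans hd.le) hf (hg.mono hsub) (fun x hx => hg_pos x (hsub hx))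
      hε hf').resolve_right hc
    exact hge.mono fun t ht => ((le_max_left _ _).trans_lt hd).trans_le ht

end DifferentialInequality

section SteeredHeading

variable {E : Type*} [NormedAddCommGroup E] [InnerProductSpace ℝ E]

/-- `b` is a unit heading that turns towards the input `u` according to the projected dynamics
`ḃ = P_b u` on `[0, ∞)`. -/
structure IsSteeredHeading (u b : ℝ → E) : Prop where
  hasDerivAt : ∀ t ≥ 0, HasDerivAt b (u t - ⟪b t, u t⟫ • b t) t
  norm_zero : ‖b 0‖ = 1

namespace IsSteeredHeading

variable {u b c : ℝ → E} {e : E} {m t : ℝ}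

theorem continuousOn (hb : IsSteeredHeading u b) : ContinuousOn b (Ici 0) := fun t ht =>
  (hb.hasDerivAt t ht).continuousAt.continuousWithinAt

theorem hasDerivAt_one_sub_inner (hb : IsSteeredHeading u b) (hc : IsSteeredHeading u c)
    (ht : 0 ≤ t) : HasDerivAt (fun t => 1 - ⟪b t, c t⟫)
      (-(⟪b t, u t⟫ + ⟪c t, u t⟫) • (1 - ⟪b t, c t⟫)) t := by
  refine (((hb.hasDerivAt t ht).inner ℝ (hc.hasDerivAt t ht)).const_sub 1).congr_deriv ?_
  simp only [inner_sub_left, inner_sub_right, real_inner_smul_left, real_inner_smul_right,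
    real_inner_comm (c t) (u t), smul_eq_mul]
  ring

theorem one_sub_inner_eq (hu : ContinuousOn u (Ici 0)) (hb : IsSteeredHeading u b)
    (hc : IsSteeredHeading u c) (ht : 0 ≤ t) :
    1 - ⟪b t, c t⟫ = exp (∫ s in 0..t, -(⟪b s, u s⟫ + ⟪c s, u s⟫)) • (1 - ⟪b 0, c 0⟫) :=
  eq_exp_integral_smul_of_hasDerivAt
    ((hb.continuousOn.inner hu).add (hc.continuousOn.inner hu)).neg
    (fun _ => hasDerivAt_one_sub_inner hb hc) ht

theorem norm_eq_one (hu : ContinuousOn u (Ici 0)) (hb : IsSteeredHeading u b) (ht : 0 ≤ t) :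
    ‖b t‖ = 1 := by
  have hdefect := one_sub_inner_eq hu hb hb ht
  rw [real_inner_self_eq_norm_sq (b 0), hb.norm_zero, one_pow, sub_self, smul_zero, sub_eq_zero,
    real_inner_self_eq_norm_sq] at hdefect
  exact (pow_eq_one_iff_of_nonneg (norm_nonneg _) two_ne_zero).1 hdefect.symm

theorem eq_of_apply_zero_eq (hu : ContinuousOn u (Ici 0)) (hb : IsSteeredHeading u b)
    (hc : IsSteeredHeading u c) (hbc : b 0 = c 0) (ht : 0 ≤ t) : b t = c t := by
  have hdefect := one_sub_inner_eq hu hb hc ht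
  rw [hbc, real_inner_self_eq_norm_sq (c 0), hc.norm_zero, one_pow, sub_self, smul_zero,
    sub_eq_zero] at hdefect
  exact (inner_eq_one_iff_of_norm_eq_one (norm_eq_one hu hb ht) (norm_eq_one hu hc ht)).1
    hdefect.symm

theorem apply_zero_eq_of_tendsto_neg (hu : ContinuousOn u (Ici 0)) (hb : IsSteeredHeading u b)
    (hc : IsSteeredHeading u c) (he : ‖e‖ = 1) (hm : 0 < m) (hlim : Tendsto u atTop (𝓝 (m • e)))
    (hb_lim : Tendsto b atTop (𝓝 (-e))) (hc_lim : Tendsto c atTop (𝓝 (-e))) : b 0 = c 0 := by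
  have hself : ⟪e, e⟫ = (1 : ℝ) := by rw [real_inner_self_eq_norm_sq, he, one_pow]
  have hrate : Tendsto (fun t => (-(⟪b t, u t⟫ + ⟪c t, u t⟫) : ℝ)) atTop (𝓝 (m + m)) := by
    simpa only [inner_neg_left, real_inner_smul_right, hself, mul_one, neg_add, neg_neg] using
      ((hb_lim.inner (𝕜 := ℝ) hlim).add (hc_lim.inner hlim)).neg
  have hdefect : Tendsto (fun t => (1 - ⟪b t, c t⟫ : ℝ)) atTop (𝓝 0) := by
    simpa only [inner_neg_neg, hself, sub_self] using (hb_lim.inner hc_lim).const_sub (1 : ℝ)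
  have hzero := eq_zero_of_hasDerivAt_smul_of_tendsto_zero
    ((hb.continuousOn.inner hu).add (hc.continuousOn.inner hu)).neg
    (fun _ => hasDerivAt_one_sub_inner hb hc)
    ((hrate.eventually (lt_mem_nhds (add_pos hm hm))).mono fun _ => le_of_lt) hdefect
  exact (inner_eq_one_iff_of_norm_eq_one hb.norm_zero hc.norm_zero).1 (sub_eq_zero.1 hzero).symm

theorem tendsto_of_tendsto_inner (hu : ContinuousOn u (Ici 0)) (hb : IsSteeredHeading u b)
    (he : ‖e‖ = 1) (hlim : Tendsto (fun t => ⟪b t, e⟫) atTop (𝓝 1)) :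
    Tendsto b atTop (𝓝 e) := by
  have hsq : Tendsto (fun t => ‖b t - e‖ ^ 2) atTop (𝓝 0) := by
    have hsq_eq : Tendsto (fun t => 2 * (1 - ⟪b t, e⟫)) atTop (𝓝 0) := by
      simpa only [sub_self, mul_zero] using (hlim.const_sub 1).const_mul 2
    refine hsq_eq.congr' ((eventually_ge_atTop 0).mono fun t ht => ?_)
    simp only [norm_sub_sq_real, norm_eq_one hu hb ht, he]
    ring
  refine tendsto_iff_norm_sub_tendsto_zero.2 ?_
  simpa only [Real.sqrt_sq (norm_nonneg _), Real.sqrt_zero] using hsq.sqrt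

theorem sub_le_inner_velocity (hu : ContinuousOn u (Ici 0)) (hb : IsSteeredHeading u b)
    (he : ‖e‖ = 1) (ht : 0 ≤ t) : m * (1 - ⟪b t, e⟫ ^ 2) - 2 * ‖u t - m • e‖ ≤
      ⟪u t - ⟪b t, u t⟫ • b t, e⟫ := by
  have hnorm : ‖b t‖ = 1 := norm_eq_one hu hb ht
  have hunit : ∀ {x : E}, ‖x‖ = 1 → |⟪x, u t - m • e⟫| ≤ ‖u t - m • e‖ := fun {x} hx => by
    simpa only [hx, one_mul] using abs_real_inner_le_norm x (u t - m • e)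
  have hVle : |⟪b t, e⟫| ≤ 1 := by
    simpa only [hnorm, he, one_mul] using abs_real_inner_le_norm (b t) e
  have hprod : ⟪b t, u t - m • e⟫ * ⟪b t, e⟫ ≤ ‖u t - m • e‖ := by
    refine (le_abs_self _).trans ?_
    rw [abs_mul]
    exact (mul_le_of_le_one_right (abs_nonneg _) hVle).trans (hunit hnorm)
  have hsplit : ⟪u t - ⟪b t, u t⟫ • b t, e⟫ = m * (1 - ⟪b t, e⟫ ^ 2) +
      ⟪e, u t - m • e⟫ - ⟪b t, u t - m • e⟫ * ⟪b t, e⟫ := by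
    simp only [inner_sub_left, inner_sub_right, real_inner_smul_left, real_inner_smul_right,
      real_inner_comm e (u t), real_inner_self_eq_norm_sq, he]
    ring
  linarith [neg_abs_le ⟪e, u t - m • e⟫, hunit he]

theorem tendsto_or_tendsto_neg (hu : ContinuousOn u (Ici 0)) (hb : IsSteeredHeading u b)
    (he : ‖e‖ = 1) (hm : 0 < m) (hlim : Tendsto u atTop (𝓝 (m • e))) :
    Tendsto b atTop (𝓝 e) ∨ Tendsto b atTop (𝓝 (-e)) := by
  have hdich : Tendsto (fun t => ⟪b t, e⟫) atTop (𝓝 1) ∨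
      Tendsto (fun t => ⟪b t, e⟫) atTop (𝓝 (-1)) := by
    refine tendsto_or_tendsto_of_sub_le_hasDerivAt (f' := fun t => ⟪u t - ⟪b t, u t⟫ • b t, e⟫)
      (g := fun x => m * (1 - x ^ 2)) (ε := fun t => 2 * ‖u t - m • e‖) ?_ ?_ (by fun_prop)
      (fun x hx => mul_pos hm (by nlinarith [hx.1, hx.2])) ?_ ?_
    · filter_upwards [eventually_ge_atTop 0] with t ht
      simpa using (hb.hasDerivAt t ht).inner ℝ (hasDerivAt_const t e)
    · filter_upwards [eventually_ge_atTop 0] with t ht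
      exact abs_le.1 (by simpa only [norm_eq_one hu hb ht, he, one_mul] using
        abs_real_inner_le_norm (b t) e)
    · simpa only [mul_zero] using (tendsto_iff_norm_sub_tendsto_zero.1 hlim).const_mul 2
    · filter_upwards [eventually_ge_atTop 0] with t ht using sub_le_inner_velocity hu hb he ht
  refine hdich.imp (tendsto_of_tendsto_inner hu hb he) fun h => ?_
  refine tendsto_of_tendsto_inner hu hb (by rwa [norm_neg]) ?_
  simpa only [inner_neg_right, neg_neg] using h.neg

end IsSteeredHeading

end SteeredHeading

section PlaneAngles

@[simp]
theorem norm_dir (θ : ℝ) : ‖dir θ‖ = 1 := by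
  simp [dir, EuclideanSpace.norm_eq]

theorem hasDerivAt_dir (θ : ℝ) : HasDerivAt dir (dir (θ + π / 2)) θ := by
  have hcoord : HasDerivAt (fun x => ![cos x, sin x]) ![cos (θ + π / 2), sin (θ + π / 2)] θ := by
    rw [cos_add_pi_div_two, sin_add_pi_div_two]
    refine hasDerivAt_pi.2 fun k => ?_
    fin_cases k
    · exact hasDerivAt_cos θ
    · exact hasDerivAt_sin θ
  exact (PiLp.continuousLinearEquiv 2 ℝ fun _ => ℝ).symm.hasFDerivAt.comp_hasDerivAt θ hcoord

theorem lipschitzWith_dir : LipschitzWith 1 dir :=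
  lipschitzWith_of_nnnorm_deriv_le (fun θ => (hasDerivAt_dir θ).differentiableAt) fun θ => by
    rw [(hasDerivAt_dir θ).deriv, ← NNReal.coe_le_coe, coe_nnnorm, norm_dir, NNReal.coe_one]

theorem sub_inner_dir_smul_dir (θ : ℝ) (v : ℝ²) :
    v - ⟪dir θ, v⟫ • dir θ = ⟪dir (θ + π / 2), v⟫ • dir (θ + π / 2) := by
  ext k
  fin_cases k <;>
    simp [dir, PiLp.inner_apply, Fin.sum_univ_two, cos_add_pi_div_two, sin_add_pi_div_two]
  · linear_combination (-v 0) * sin_sq_add_cos_sq θ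
  · linear_combination (-v 1) * sin_sq_add_cos_sq θ

theorem countable_of_forall_dir_eq {s : Set ℝ} (hs : ∀ x ∈ s, ∀ y ∈ s, dir x = dir y) :
    s.Countable := by
  rcases s.eq_empty_or_nonempty with rfl | ⟨y, hy⟩
  · exact countable_empty
  refine (countable_range fun k : ℤ => y + 2 * π * k).mono fun x hx => ?_
  have hcoord : ∀ k, dir x k = dir y k := fun k => congrArg (fun w : ℝ² => w k) (hs x hx y hy)
  obtain ⟨k, hk⟩ := Angle.angle_eq_iff_two_pi_dvd_sub.1 <|
    Angle.cos_sin_inj (by simpa [dir] using hcoord 0) (by simpa [dir] using hcoord 1)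
  exact ⟨k, (sub_eq_iff_eq_add'.1 hk).symm⟩

theorem isometry_rot (α : ℝ) : Isometry (rot α) := Isometry.of_dist_eq fun v w => by
  simp only [EuclideanSpace.dist_eq, Fin.sum_univ_two, Real.dist_eq, sq_abs, rot,
    WithLp.equiv_symm_apply, Matrix.cons_val_zero, Matrix.cons_val_one]
  congr 1
  linear_combination ((v 0 - w 0) ^ 2 + (v 1 - w 1) ^ 2) * sin_sq_add_cos_sq α

end PlaneAngles

section Measurability

theorem tendsto_atTop_nhds_iff_comp_ratCast {X : Type*} [TopologicalSpace X] [RegularSpace X]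
    {f : ℝ → X} {x : X} (hf : Continuous f) :
    Tendsto f atTop (𝓝 x) ↔ Tendsto (fun q : ℚ => f q) atTop (𝓝 x) := by
  refine ⟨fun h => h.comp (tendsto_ratCast_atTop_iff.2 tendsto_id), fun h => ?_⟩
  refine (closed_nhds_basis x).tendsto_right_iff.2 fun V ⟨hV, hV_closed⟩ => ?_
  obtain ⟨Q, hQ⟩ := eventually_atTop.1 (h.eventually hV)
  filter_upwards [eventually_gt_atTop (Q : ℝ)] with t ht
  have hdense : t ∈ closure (Ioi (Q : ℝ) ∩ range ((↑) : ℚ → ℝ)) :=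
    Rat.denseRange_cast.open_subset_closure_inter isOpen_Ioi ht
  refine hV_closed.closure_subset (hf.continuousWithinAt.mem_closure hdense ?_)
  rintro _ ⟨hq, q, rfl⟩
  exact hQ q (Rat.cast_lt.1 (mem_Ioi.1 hq)).le

theorem measurableSet_tendsto_atTop_nhds {Ω X : Type*} [MeasurableSpace Ω] [TopologicalSpace X]
    [TopologicalSpace.PseudoMetrizableSpace X] [MeasurableSpace X] [OpensMeasurableSpace X]
    {f : Ω → ℝ → X} (hf : ∀ t, Measurable fun ω => f ω t) (hf_cont : ∀ ω, Continuous (f ω))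
    (x : X) : MeasurableSet {ω | Tendsto (f ω) atTop (𝓝 x)} := by
  simp only [tendsto_atTop_nhds_iff_comp_ratCast (hf_cont _)]
  exact measurableSet_tendsto (𝓝 x) fun q : ℚ => hf q

theorem ae_mem_of_forall_ae_update_mem {ι : Type*} [Fintype ι] [DecidableEq ι] (i : ι)
    {S : Set (ι → ℝ)} (hS : MeasurableSet S) (h : ∀ θ, ∀ᵐ x, Function.update θ i x ∈ S) :
    ∀ᵐ θ, θ ∈ S := by
  refine ae_mem_of_ae_add_linearMap_mem (LinearMap.single ℝ (fun _ => ℝ) i) volume volume hS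
    fun θ => ?_
  have hshift : ∀ x, θ + Pi.single i x = Function.update θ i (θ i + x) := fun x => by
    ext j
    rcases eq_or_ne j i with rfl | hj <;> simp [*]
  simpa only [LinearMap.coe_single, hshift] using
    (measurePreserving_add_left volume (θ i)).quasiMeasurePreserving.ae (h θ)

end Measurability

section Cascade

variable {ι E : Type*} [Preorder ι]

/-- A map `U` from configurations to inputs is a cascade if the input of each agent depends only on
the strictly earlier agents. -/
def IsCascade (U : (ι → E) → ι → E) : Prop :=
  ∀ ⦃x y : ι → E⦄ ⦃i : ι⦄, (∀ j < i, x j = y j) → U x i = U y i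

theorem IsCascade.tendsto_apply [TopologicalSpace E] {U : (ι → E) → ι → E} (hcasc : IsCascade U)
    (hU : Continuous U) {T : Type*} {l : Filter T} {b : ι → T → E} {e : ι → E} {i : ι}
    (hlim : ∀ j < i, Tendsto (b j) l (𝓝 (e j))) :
    Tendsto (fun t => U (fun j => b j t) i) l (𝓝 (U e i)) := by
  classical
  have hinput : ∀ t, U (fun j => b j t) i = U (fun j => if j < i then b j t else e j) i :=
    fun t => hcasc fun j hj => (if_pos hj).symm
  have hconf : Tendsto (fun t j => if j < i then b j t else e j) l (𝓝 e) := by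
    refine tendsto_pi_nhds.2 fun j => ?_
    by_cases hj : j < i
    · simpa only [if_pos hj] using hlim j hj
    · simpa only [if_neg hj] using tendsto_const_nhds
  simp only [hinput]
  exact (((continuous_apply i).comp hU).tendsto e).comp hconf

end Cascade

section HeadingSystem

variable {ι E : Type*} [NormedAddCommGroup E] [InnerProductSpace ℝ E]

/-- The headings `b i` solve the coupled projected dynamics `ḃᵢ = P_{bᵢ} (U b)ᵢ` on `[0, ∞)`,
starting from unit vectors; `U` sends a configuration of headings to the inputs of the agents. -/
def IsHeadingSolution (U : (ι → E) → ι → E) (b : ι → ℝ → E) : Prop :=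
  ∀ i, IsSteeredHeading (fun t => U (fun j => b j t) i) (b i)

/-- A configuration `e` of unit headings each of which is a positive multiple of the input it
induces, so that `e` is an equilibrium of the projected dynamics at which every input pulls
towards `e`. -/
structure IsAligned (U : (ι → E) → ι → E) (e : ι → E) : Prop where
  norm_eq_one : ∀ i, ‖e i‖ = 1
  exists_pos_smul : ∀ i, ∃ m > (0 : ℝ), U e i = m • e i

variable {U : (ι → E) → ι → E} {b c : ι → ℝ → E} {e : ι → E}

namespace IsHeadingSolution

theorem continuousOn_input (hU : Continuous U) (hb : IsHeadingSolution U b) (i : ι) :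
    ContinuousOn (fun t => U (fun j => b j t) i) (Ici 0) :=
  ((continuous_apply i).comp hU).comp_continuousOn
    (continuousOn_pi.2 fun j => (hb j).continuousOn)

variable [Preorder ι] {i : ι}

theorem tendsto_or_tendsto_neg (hU : Continuous U) (hcasc : IsCascade U) (he : IsAligned U e)
    (hb : IsHeadingSolution U b) (hlim : ∀ j < i, Tendsto (b j) atTop (𝓝 (e j))) :
    Tendsto (b i) atTop (𝓝 (e i)) ∨ Tendsto (b i) atTop (𝓝 (-e i)) := by
  obtain ⟨m, hm, hUe⟩ := he.exists_pos_smul i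
  exact (hb i).tendsto_or_tendsto_neg (hb.continuousOn_input hU i) (he.norm_eq_one i) hm
    (hUe ▸ hcasc.tendsto_apply hU hlim)

theorem isSteeredHeading_of_eqOn (hcasc : IsCascade U) (hc : IsHeadingSolution U c)
    (hbc : ∀ j < i, EqOn (b j) (c j) (Ici 0)) :
    IsSteeredHeading (fun t => U (fun j => b j t) i) (c i) where
  hasDerivAt t ht := by
    have hinput : U (fun j => b j t) i = U (fun j => c j t) i := hcasc fun j hj => hbc j hj ht
    simpa only [hinput] using (hc i).hasDerivAt t ht
  norm_zero := (hc i).norm_zero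

theorem eqOn_of_apply_zero_eq [WellFoundedLT ι] (hU : Continuous U) (hcasc : IsCascade U)
    (hb : IsHeadingSolution U b) (hc : IsHeadingSolution U c)
    (hbc : ∀ j ≤ i, b j 0 = c j 0) : EqOn (b i) (c i) (Ici 0) := by
  induction i using WellFoundedLT.induction with
  | _ i ih =>
    exact fun t ht => (hb i).eq_of_apply_zero_eq (hb.continuousOn_input hU i)
      (hc.isSteeredHeading_of_eqOn hcasc fun j hj => ih j hj fun k hk => hbc k (hk.trans hj.le))
      (hbc i le_rfl) ht

theorem apply_zero_eq_of_not_tendsto [WellFoundedLT ι] (hU : Continuous U) (hcasc : IsCascade U)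
    (he : IsAligned U e) (hb : IsHeadingSolution U b) (hc : IsHeadingSolution U c)
    (hbc : ∀ j < i, b j 0 = c j 0) (hlim : ∀ j < i, Tendsto (b j) atTop (𝓝 (e j)))
    (hb_lim : ¬Tendsto (b i) atTop (𝓝 (e i))) (hc_lim : ¬Tendsto (c i) atTop (𝓝 (e i))) :
    b i 0 = c i 0 := by
  obtain ⟨m, hm, hUe⟩ := he.exists_pos_smul i
  have heqOn : ∀ j < i, EqOn (b j) (c j) (Ici 0) := fun j hj =>
    eqOn_of_apply_zero_eq hU hcasc hb hc fun k hk => hbc k (hk.trans_lt hj)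
  have hlim' : ∀ j < i, Tendsto (c j) atTop (𝓝 (e j)) := fun j hj =>
    (hlim j hj).congr' ((heqOn j hj).eventuallyEq_of_mem (Ici_mem_atTop 0))
  exact (hb i).apply_zero_eq_of_tendsto_neg (hb.continuousOn_input hU i)
    (hc.isSteeredHeading_of_eqOn hcasc heqOn) (he.norm_eq_one i) hm
    (hUe ▸ hcasc.tendsto_apply hU hlim)
    ((hb.tendsto_or_tendsto_neg hU hcasc he hlim).resolve_left hb_lim)
    ((hc.tendsto_or_tendsto_neg hU hcasc he hlim').resolve_left hc_lim)

end IsHeadingSolution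

end HeadingSystem

section AngleCoordinates

variable {ι : Type*} {U : (ι → ℝ²) → ι → ℝ²} {K : ℝ≥0}

/-- `Ψ θ` is the heading solution issuing from the initial angles `θ`, and it depends continuously
on `θ`. -/
structure IsHeadingFlow (U : (ι → ℝ²) → ι → ℝ²) (Ψ : (ι → ℝ) → ι → ℝ → ℝ²) : Prop where
  isHeadingSolution : ∀ θ, IsHeadingSolution U (Ψ θ)
  apply_zero : ∀ θ i, Ψ θ i 0 = dir (θ i)
  continuous : ∀ i, ∀ t ≥ 0, Continuous fun θ => Ψ θ i t

/-- The right-hand side of the projected dynamics in angle coordinates: if `b i = dir (φ i)`, then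
`ḃᵢ = P_{bᵢ} (U b)ᵢ` says that `φ i` has derivative `angularVelocity U φ i`. -/
noncomputable def angularVelocity (U : (ι → ℝ²) → ι → ℝ²) (φ : ι → ℝ) (i : ι) : ℝ :=
  ⟪dir (φ i + π / 2), U (fun j => dir (φ j)) i⟫

variable [Fintype ι]

theorem norm_apply_dir_le (hU : LipschitzWith K U) (φ : ι → ℝ) (i : ι) :
    ‖U (fun j => dir (φ j)) i‖ ≤ ‖U 0‖ + K := by
  have hball : ‖fun j => dir (φ j)‖ ≤ 1 :=
    (pi_norm_le_iff_of_nonneg zero_le_one).2 fun j => (norm_dir _).le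
  calc ‖U (fun j => dir (φ j)) i‖ ≤ ‖U 0‖ + ‖U (fun j => dir (φ j)) - U 0‖ :=
        (norm_le_pi_norm _ i).trans (norm_le_norm_add_norm_sub' _ _)
    _ ≤ ‖U 0‖ + K := by
        gcongr
        simpa using (hU.norm_sub_le _ 0).trans (mul_le_of_le_one_right K.2 (by simpa using hball))

theorem norm_angularVelocity_le (hU : LipschitzWith K U) (φ : ι → ℝ) :
    ‖angularVelocity U φ‖ ≤ ‖U 0‖ + K :=
  (pi_norm_le_iff_of_nonneg (by positivity)).2 fun i => calc
    ‖angularVelocity U φ i‖ ≤ ‖dir (φ i + π / 2)‖ * ‖U (fun j => dir (φ j)) i‖ :=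
      norm_inner_le_norm _ _
    _ ≤ ‖U 0‖ + K := by simpa using norm_apply_dir_le hU φ i

theorem lipschitzWith_dir_pi : LipschitzWith 1 fun (φ : ι → ℝ) j => dir (φ j) :=
  LipschitzWith.of_dist_le_mul fun φ ψ => by
    refine (dist_pi_le_iff (by positivity)).2 fun j => (lipschitzWith_dir.dist_le_mul _ _).trans ?_
    gcongr
    exact dist_le_pi_dist φ ψ j

theorem lipschitzWith_angularVelocity (hU : LipschitzWith K U) :
    LipschitzWith (‖U 0‖₊ + K + K) (angularVelocity U) := by
  refine LipschitzWith.of_dist_le_mul fun φ ψ => (dist_pi_le_iff (by positivity)).2 fun i => ?_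
  set u : (ι → ℝ) → ℝ² := fun φ => U (fun j => dir (φ j)) i with hu
  have hdir : ‖dir (φ i + π / 2) - dir (ψ i + π / 2)‖ ≤ dist φ ψ := by
    rw [← dist_eq_norm]
    simpa using (lipschitzWith_dir.dist_le_mul (φ i + π / 2) (ψ i + π / 2)).trans
      (by simpa using dist_le_pi_dist φ ψ i)
  have hinput : ‖u φ - u ψ‖ ≤ K * dist φ ψ := by
    rw [← dist_eq_norm]
    simpa using (dist_le_pi_dist _ _ i).trans ((hU.comp lipschitzWith_dir_pi).dist_le_mul φ ψ)
  have hsplit : angularVelocity U φ i - angularVelocity U ψ i =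
      ⟪dir (φ i + π / 2) - dir (ψ i + π / 2), u φ⟫ + ⟪dir (ψ i + π / 2), u φ - u ψ⟫ := by
    simp only [angularVelocity, hu, inner_sub_left, inner_sub_right]
    ring
  calc dist (angularVelocity U φ i) (angularVelocity U ψ i)
      ≤ ‖dir (φ i + π / 2) - dir (ψ i + π / 2)‖ * ‖u φ‖ + ‖dir (ψ i + π / 2)‖ * ‖u φ - u ψ‖ := by
        rw [dist_eq_norm, hsplit]
        exact (norm_add_le _ _).trans (add_le_add (norm_inner_le_norm _ _) (norm_inner_le_norm _ _))
    _ ≤ dist φ ψ * (‖U 0‖ + K) + 1 * (K * dist φ ψ) := by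
        gcongr
        · exact norm_apply_dir_le hU φ i
        · exact (norm_dir _).le
    _ = ↑(‖U 0‖₊ + K + K) * dist φ ψ := by
        push_cast
        ring

theorem isHeadingSolution_dir {φ : ℝ → ι → ℝ}
    (hφ : IsIntegralCurve φ fun _ => angularVelocity U) :
    IsHeadingSolution U fun i t => dir (φ t i) := fun i =>
  { hasDerivAt := fun t _ => by
      rw [sub_inner_dir_smul_dir]
      exact (hasDerivAt_dir (φ t i)).scomp t (hasDerivAt_pi.1 (hφ t) i)
    norm_zero := norm_dir _ }

theorem exists_isHeadingFlow (hU : LipschitzWith K U) : ∃ Ψ, IsHeadingFlow U Ψ := by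
  have hF := lipschitzWith_angularVelocity hU
  have hcurve := exists_isIntegralCurve_of_lipschitzWith_of_norm_le (M := ‖U 0‖₊ + K) hF
    (norm_angularVelocity_le hU)
  choose φ hφ_zero hφ using hcurve
  exact ⟨fun θ i t => dir (φ θ t i),
    { isHeadingSolution := fun θ => isHeadingSolution_dir (hφ θ)
      apply_zero := fun θ i => by simp only [hφ_zero]
      continuous := fun i t ht => lipschitzWith_dir.continuous.comp ((continuous_apply i).comp
        (continuous_of_forall_isIntegralCurve hF hφ_zero hφ ht)) }⟩

end AngleCoordinates

section AlmostEverywhere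

variable {ι : Type*} {U : (ι → ℝ²) → ι → ℝ²} {Ψ : (ι → ℝ) → ι → ℝ → ℝ²} {e : ι → ℝ²}

namespace IsHeadingFlow

theorem measurableSet_tendsto [Countable ι] (hΨ : IsHeadingFlow U Ψ) (i : ι) (v : ℝ²) :
    MeasurableSet {θ | Tendsto (Ψ θ i) atTop (𝓝 v)} := by
  have hclamp : ∀ θ, Tendsto (Ψ θ i) atTop (𝓝 v) ↔
      Tendsto (fun t => Ψ θ i (max t 0)) atTop (𝓝 v) := fun θ =>
    tendsto_congr' <| (eventually_ge_atTop 0).mono fun t ht =>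
      congrArg (Ψ θ i) (max_eq_left ht).symm
  simp only [hclamp]
  exact measurableSet_tendsto_atTop_nhds
    (fun t => (hΨ.continuous i _ (le_max_right t 0)).measurable)
    (fun θ => (hΨ.isHeadingSolution θ i).continuousOn.comp_continuous (by fun_prop)
      fun t => le_max_right t 0) v

variable [Preorder ι]

theorem countable_setOf_update_not_tendsto [DecidableEq ι] [WellFoundedLT ι] (hU : Continuous U)
    (hcasc : IsCascade U) (he : IsAligned U e) (hΨ : IsHeadingFlow U Ψ) (θ : ι → ℝ) (i : ι) :
    {x | (∀ j < i, Tendsto (Ψ (Function.update θ i x) j) atTop (𝓝 (e j))) ∧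
      ¬Tendsto (Ψ (Function.update θ i x) i) atTop (𝓝 (e i))}.Countable := by
  refine countable_of_forall_dir_eq fun x ⟨hx_lt, hx⟩ y ⟨_, hy⟩ => ?_
  have hdir := (hΨ.isHeadingSolution _).apply_zero_eq_of_not_tendsto hU hcasc he
    (hΨ.isHeadingSolution _)
    (fun j hj => by simp only [hΨ.apply_zero, Function.update_of_ne hj.ne]) hx_lt hx hy
  simpa only [hΨ.apply_zero, Function.update_self] using hdir

theorem ae_tendsto_of_forall_lt_tendsto [Fintype ι] (hU : Continuous U) (hcasc : IsCascade U)
    (he : IsAligned U e) (hΨ : IsHeadingFlow U Ψ) (i : ι) :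
    ∀ᵐ θ, (∀ j < i, Tendsto (Ψ θ j) atTop (𝓝 (e j))) → Tendsto (Ψ θ i) atTop (𝓝 (e i)) := by
  classical
  have : WellFoundedLT ι := Finite.to_wellFoundedLT
  have hmeas : ∀ j, Measurable fun θ => Tendsto (Ψ θ j) atTop (𝓝 (e j)) := fun j =>
    measurableSet_setOfPred.1 (hΨ.measurableSet_tendsto j (e j))
  have hmeas_imp := (Measurable.forall fun j => (measurable_const (a := j < i)).imp (hmeas j)).imp
    (hmeas i)
  refine ae_mem_of_forall_ae_update_mem i (measurableSet_setOfPred.2 hmeas_imp) fun θ => ?_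
  filter_upwards
    [(hΨ.countable_setOf_update_not_tendsto hU hcasc he θ i).ae_notMem volume] with x hx hlt
  exact not_not.1 fun hnot => hx ⟨hlt, hnot⟩

end IsHeadingFlow

theorem ae_forall_tendsto_of_isCascade [Fintype ι] [Preorder ι] {K : ℝ≥0} (hU : LipschitzWith K U)
    (hcasc : IsCascade U) (he : IsAligned U e) :
    ∀ᵐ θ : ι → ℝ, ∀ b, IsHeadingSolution U b → (∀ i, b i 0 = dir (θ i)) →
      ∀ i, Tendsto (b i) atTop (𝓝 (e i)) := by
  have : WellFoundedLT ι := Finite.to_wellFoundedLT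
  obtain ⟨Ψ, hΨ⟩ := exists_isHeadingFlow hU
  filter_upwards [ae_all_iff.2 (hΨ.ae_tendsto_of_forall_lt_tendsto hU.continuous hcasc he)]
    with θ hθ b hb hb_zero i
  have heqOn : EqOn (Ψ θ i) (b i) (Ici 0) :=
    (hΨ.isHeadingSolution θ).eqOn_of_apply_zero_eq hU.continuous hcasc hb
      fun j _ => (hΨ.apply_zero θ j).trans (hb_zero j).symm
  refine Tendsto.congr' (heqOn.eventuallyEq_of_mem (Ici_mem_atTop 0)) ?_
  exact WellFoundedLT.induction (motive := fun i => Tendsto (Ψ θ i) atTop (𝓝 (e i))) i hθ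

end AlmostEverywhere

section Network

variable {ι : Type*} [DecidableEq ι] {r : ι} {N : ι → Finset ι} {α : ι → ι → ℝ}

/-- The inputs of a network with root `r`: the root is driven by the target heading `v`, and every
other agent `i` by the sum of its in-neighbours' headings, each rotated by `α i j`. -/
noncomputable def networkInput (r : ι) (N : ι → Finset ι) (α : ι → ι → ℝ) (v : ℝ²) (b : ι → ℝ²)
    (i : ι) : ℝ² :=
  if i = r then v else ∑ j ∈ N i, rot (α i j) (b j)

theorem lipschitzWith_networkInput [Fintype ι] (v : ℝ²) :
    LipschitzWith (Fintype.card ι) (networkInput r N α v) := by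
  refine LipschitzWith.of_dist_le_mul fun b c => (dist_pi_le_iff (by positivity)).2 fun i => ?_
  by_cases hi : i = r
  · simp only [networkInput, if_pos hi, dist_self]
    positivity
  · simp only [networkInput, if_neg hi]
    calc dist (∑ j ∈ N i, rot (α i j) (b j)) (∑ j ∈ N i, rot (α i j) (c j))
        ≤ ∑ _j ∈ N i, dist b c := dist_sum_sum_le_of_le _ fun _ _ => by
          simpa only [(isometry_rot _).dist_eq] using dist_le_pi_dist b c _
      _ ≤ Fintype.card ι * dist b c := by
          rw [Finset.sum_const, nsmul_eq_mul]
          gcongr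
          exact Finset.card_le_univ _

theorem isCascade_networkInput [Preorder ι] (horder : ∀ i ≠ r, ∀ j ∈ N i, j < i) (v : ℝ²) :
    IsCascade (networkInput r N α v) := fun b c i hbc => by
  by_cases hi : i = r
  · simp only [networkInput, if_pos hi]
  · simp only [networkInput, if_neg hi]
    exact Finset.sum_congr rfl fun j hj => by rw [hbc j (horder i hi j hj)]

theorem isAligned_networkInput {e : ι → ℝ²} (he : ∀ i, ‖e i‖ = 1)
    (hN : ∀ i ≠ r, (N i).Nonempty) (hrot : ∀ i ≠ r, ∀ j ∈ N i, e i = rot (α i j) (e j)) :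
    IsAligned (networkInput r N α (e r)) e where
  norm_eq_one := he
  exists_pos_smul i := by
    by_cases hi : i = r
    · exact ⟨1, one_pos, by simp only [networkInput, hi, if_true, one_smul]⟩
    · refine ⟨(N i).card, Nat.cast_pos.2 (hN i hi).card_pos, ?_⟩
      rw [networkInput, if_neg hi, Nat.cast_smul_eq_nsmul, ← Finset.sum_const]
      exact Finset.sum_congr rfl fun j hj => (hrot i hi j hj).symm

theorem isHeadingSolution_networkInput {v : ℝ²} {b : ι → ℝ → ℝ²} {θ : ι → ℝ}
    (hroot : ∀ t ≥ 0, HasDerivAt (b r) (proj (b r t) v) t)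
    (hb : ∀ i ≠ r, ∀ t ≥ 0,
      HasDerivAt (b i) (proj (b i t) (∑ j ∈ N i, rot (α i j) (b j t))) t)
    (hinit : ∀ i, b i 0 = dir (θ i)) : IsHeadingSolution (networkInput r N α v) b := fun i =>
  { hasDerivAt := fun t ht => by
      by_cases hi : i = r
      · subst hi
        simp only [networkInput, if_true]
        exact hroot t ht
      · simp only [networkInput, if_neg hi]
        exact hb i hi t ht
    norm_zero := by rw [hinit, norm_dir] }

end Network

theorem tendsto_sub_rot {T : Type*} {l : Filter T} {b c : T → ℝ²} {v w : ℝ²} {β : ℝ}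
    (hb : Tendsto b l (𝓝 v)) (hc : Tendsto c l (𝓝 w)) (hvw : v = rot β w) :
    Tendsto (fun t => b t - rot β (c t)) l (𝓝 0) := by
  simpa only [hvw, sub_self, Function.comp_apply] using
    hb.sub (((isometry_rot β).continuous.tendsto w).comp hc)

theorem stmt12_general {ι : Type*} [Fintype ι] [Preorder ι] (r : ι) (N : ι → Finset ι)
    (hroot : ∀ i ≠ r, (N i).Nonempty) (horder : ∀ i ≠ r, ∀ j ∈ N i, j < i)
    (α : ι → ι → ℝ) (e : ι → ℝ²) (he : ∀ i, ‖e i‖ = 1)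
    (hrot : ∀ i ≠ r, ∀ j ∈ N i, e i = rot (α i j) (e j)) :
    ∀ᵐ θ : ι → ℝ, ∀ b : ι → ℝ → ℝ²,
      (∀ t ≥ 0, HasDerivAt (b r) (proj (b r t) (e r)) t) →
      (∀ i ≠ r, ∀ t ≥ 0,
        HasDerivAt (b i) (proj (b i t) (∑ j ∈ N i, rot (α i j) (b j t))) t) →
      (∀ i, b i 0 = dir (θ i)) →
      (∀ i, Tendsto (b i) atTop (𝓝 (e i))) ∧
        ∀ i ≠ r, ∀ j ∈ N i, Tendsto (fun t => b i t - rot (α i j) (b j t)) atTop (𝓝 0) := by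
  classical
  filter_upwards [ae_forall_tendsto_of_isCascade (lipschitzWith_networkInput (e r))
    (isCascade_networkInput horder (e r)) (isAligned_networkInput he hroot hrot)]
    with θ hθ b hb_root hb hinit
  have hlim := hθ b (isHeadingSolution_networkInput hb_root hb hinit) hinit
  exact ⟨hlim, fun i hi j hj => tendsto_sub_rot (hlim i) (hlim j) (hrot i hi j hj)⟩

/-- Main theorem: for a rooted out-branching graph (root = agent 0, each other agent i has a
nonempty in-neighbor set of agents with smaller index) with feasible desired angles toward a
common target p*, the closed loop ḃ₀ = P_{b₀} b₀*, ḃᵢ = P_{bᵢ} Σ_{j ∈ Nᵢ} R(αᵢⱼ) bⱼ drives,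
for a.e. vector of initial angles, every solution to bᵢ → bᵢ*; in particular
bᵢ - R(αᵢⱼ) bⱼ → 0 for every edge, so all headings point toward p*. -/
theorem stmt12 (n : ℕ)
    (p : Fin (n + 2) → EuclideanSpace ℝ (Fin 2)) (ps : EuclideanSpace ℝ (Fin 2))
    (hps : ∀ i, ps ≠ p i)
    (N : Fin (n + 2) → Finset (Fin (n + 2)))
    (hroot : ∀ i : Fin (n + 2), i ≠ 0 → (N i).Nonempty)
    (horder : ∀ i : Fin (n + 2), ∀ j ∈ N i, (j : ℕ) < (i : ℕ))
    (α : Fin (n + 2) → Fin (n + 2) → ℝ)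
    (bis : Fin (n + 2) → EuclideanSpace ℝ (Fin 2))
    (hbis : ∀ i, bis i = ‖ps - p i‖⁻¹ • (ps - p i))
    (hang : ∀ i : Fin (n + 2), i ≠ 0 → ∀ j ∈ N i, bis i = rot (α i j) (bis j)) :
    ∀ᵐ θ : Fin (n + 2) → ℝ ∂volume, ∀ b : Fin (n + 2) → ℝ → EuclideanSpace ℝ (Fin 2),
      (∀ t ≥ (0 : ℝ), HasDerivAt (b 0) (proj (b 0 t) (bis 0)) t) →
      (∀ i : Fin (n + 2), i ≠ 0 → ∀ t ≥ (0 : ℝ),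
        HasDerivAt (b i) (proj (b i t) (∑ j ∈ N i, rot (α i j) (b j t))) t) →
      (∀ i, b i 0 = dir (θ i)) →
      (∀ i, Filter.Tendsto (b i) Filter.atTop (nhds (bis i)))
      ∧ ∀ i : Fin (n + 2), i ≠ 0 → ∀ j ∈ N i,
          Filter.Tendsto (fun t => b i t - rot (α i j) (b j t)) Filter.atTop (nhds 0) := by
  have hunit : ∀ i, ‖bis i‖ = 1 := fun i =>
    hbis i ▸ norm_smul_inv_norm (𝕜 := ℝ) (sub_ne_zero.2 (hps i))
  exact stmt12_general 0 N hroot (fun i _ => horder i) α bis hunit hang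
end
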